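/- arXiv:1303.6642 — 2 statements merged into one kernel-verified Lean document; each statement's English description precedes it below -/
import Mathlib

section
/- Let G be a finite simple graph on V = {x_1, ..., x_n} with cover ideal J = J(G) ⊆ S = K[x_1, ..., x_n]. Then J^2 has the irredundant primary decomposition J^2 = [⋂_{e ∈ E(G)} p_e^2] ∩ [⋂_{W : G_W is an induced odd cycle} p_W^{⟨2⟩}], where for an edge e = {x_i, x_j} we write p_e = (x_i, x_j), and for a subset W ⊆ V we write p_W^{⟨2⟩} = (x_i^2 : x_i ∈ W). -/
open MvPolynomial

/-- A finite simple graph on vertex set `Fin n`, presented as a hypergraph all of whose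
edges have cardinality exactly two. -/
structure GraphOn (n : ℕ) where
  edges : Finset (Finset (Fin n))
  card_eq : ∀ e ∈ edges, e.card = 2

/-- `w` is a vertex cover of `G`: it meets every edge. -/
def IsCover {n : ℕ} (G : GraphOn n) (w : Finset (Fin n)) : Prop :=
  ∀ e ∈ G.edges, (w ∩ e).Nonempty

/-- The cover ideal of `G`. -/
noncomputable def coverIdeal {n : ℕ} (K : Type*) [Field K] (G : GraphOn n) :
    Ideal (MvPolynomial (Fin n) K) :=
  Ideal.span {m | ∃ w : Finset (Fin n), IsCover G w ∧ m = ∏ i ∈ w, X i}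

/-- The induced subgraph of `G` on `W` is an odd cycle. -/
def IsInducedOddCycle {n : ℕ} (G : GraphOn n) (W : Finset (Fin n)) : Prop :=
  3 ≤ W.card ∧ Odd W.card ∧
    ∃ f : ZMod W.card → Fin n, Function.Injective f ∧ (∀ i, f i ∈ W) ∧
      (∀ w ∈ W, ∃ i, f i = w) ∧
      (∀ i, ({f i, f (i + 1)} : Finset (Fin n)) ∈ G.edges) ∧
      (∀ e ∈ G.edges, e ⊆ W → ∃ i, e = ({f i, f (i + 1)} : Finset (Fin n)))

/-- The index set for the components of the primary decomposition of `J(G)²`: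
the edges of `G` together with the vertex sets of induced odd cycles of `G`. -/
def DecompIndex {n : ℕ} (G : GraphOn n) : Type :=
  {e : Finset (Fin n) // e ∈ G.edges} ⊕ {W : Finset (Fin n) // IsInducedOddCycle G W}

/-- The components of the primary decomposition of `J(G)²`: `p_e² = (x_i, x_j)²` for an
edge `e = {x_i, x_j}`, and `p_W^⟨2⟩ = (x_i² : x_i ∈ W)` for an induced odd cycle on `W`. -/
noncomputable def decompComponent {n : ℕ} (K : Type*) [Field K] (G : GraphOn n) :
    DecompIndex G → Ideal (MvPolynomial (Fin n) K)
  | Sum.inl e => (Ideal.span {p | ∃ i ∈ e.1, p = (X i : MvPolynomial (Fin n) K)}) ^ 2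
  | Sum.inr W => Ideal.span {p | ∃ i ∈ W.1, p = (X i : MvPolynomial (Fin n) K) ^ 2}

/-!
All ideals here are monomial, so everything is read off from exponents, viewed as vertex weights
`a`. A monomial lies in `J²` iff `a` dominates the sum of the indicators of two vertex covers. Such
covers exist iff every edge has weight at least `2` and the graph induced on `{v | a v ≤ 1}` is
bipartite: a vertex of weight `1` lies in at most one of the two covers, which gives the colouring.
The vertex sets of induced odd cycles are exactly the minimal vertex sets inducing a
non-bipartite subgraph, so bipartiteness says that every induced odd cycle has a vertex of weight
at least `2`. A component is primary because membership of a monomial depends only on the variables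
in a set of which each has a power in the component. The component of an edge `e` is exposed as
necessary by the weight `0` on `e` and `2` elsewhere, that of a cycle `W` by the weight `1` on `W`
and `2` elsewhere.
-/

section MonomialIdeals

variable {σ R : Type*}

theorem mem_restrictSupportIdeal_iff [CommSemiring R] {U : Set (σ →₀ ℕ)} {hU : IsUpperSet U}
    {f : MvPolynomial σ R} : f ∈ restrictSupportIdeal R U hU ↔ ∀ a ∈ f.support, a ∈ U :=
  Iff.rfl

theorem monomial_mem_restrictSupportIdeal_iff [CommSemiring R] [Nontrivial R]
    {U : Set (σ →₀ ℕ)} {hU : IsUpperSet U} {a : σ →₀ ℕ} :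
    monomial a 1 ∈ restrictSupportIdeal R U hU ↔ a ∈ U :=
  Iff.trans (monomial_mem_restrictSupport R) (or_iff_left one_ne_zero)

theorem iInf_restrictSupportIdeal [CommSemiring R] {ι : Sort*} {U : ι → Set (σ →₀ ℕ)}
    (hU : ∀ i, IsUpperSet (U i)) :
    ⨅ i, restrictSupportIdeal R (U i) (hU i) =
      restrictSupportIdeal R (⋂ i, U i) (isUpperSet_iInter hU) := by
  ext f
  simp only [Submodule.mem_iInf, mem_restrictSupportIdeal_iff, Set.mem_iInter]
  exact ⟨fun h a ha i => h i a ha, fun h i a ha => h a ha i⟩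

theorem span_monomial_image_eq_restrictSupportIdeal [CommSemiring R] (A : Set (σ →₀ ℕ)) :
    Ideal.span ((fun a => monomial a (1 : R)) '' A) =
      restrictSupportIdeal R (upperClosure A) (upperClosure A).upper := by
  ext f
  simp only [mem_ideal_span_monomial_image, mem_restrictSupportIdeal_iff, SetLike.mem_coe,
    mem_upperClosure]

open scoped Pointwise in
theorem span_monomial_image_pow [CommSemiring R] (A : Set (σ →₀ ℕ)) (k : ℕ) :
    Ideal.span ((fun a => monomial a (1 : R)) '' A) ^ k =
      restrictSupportIdeal R (upperClosure (k • A)) (upperClosure (k • A)).upper := by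
  rw [← span_monomial_image_eq_restrictSupportIdeal]
  induction k with
  | zero => simp [Ideal.one_eq_top]
  | succ k ih =>
    rw [pow_succ, ih, Ideal.span_mul_span', succ_nsmul]
    congr 1
    exact (Set.image_image2_distrib fun a b => by simp [monomial_mul]).symm

open scoped Pointwise in
theorem mem_upperClosure_nsmul_image_single_iff {s : Finset σ} {k : ℕ} {a : σ →₀ ℕ} :
    a ∈ upperClosure (k • (fun i => Finsupp.single i 1) '' (s : Set σ)) ↔ k ≤ ∑ i ∈ s, a i := by
  classical
  induction k generalizing a with
  | zero => simp [mem_upperClosure]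
  | succ k ih =>
    simp only [mem_upperClosure, succ_nsmul, Set.mem_add] at ih ⊢
    constructor
    · rintro ⟨_, ⟨b, hb, _, ⟨i, hi, rfl⟩, rfl⟩, hle⟩
      have hb' : k ≤ ∑ j ∈ s, b j := ih.1 ⟨b, hb, le_rfl⟩
      calc k + 1 ≤ ∑ j ∈ s, (b + Finsupp.single i 1 : σ →₀ ℕ) j := by
            simpa [Finset.sum_add_distrib, Finsupp.single_apply, Finset.mem_coe.1 hi]
        _ ≤ ∑ j ∈ s, a j := Finset.sum_le_sum fun j _ => hle j
    · intro hk
      obtain ⟨i, hi, hai⟩ := Finset.exists_ne_zero_of_sum_ne_zero (Nat.ne_zero_of_lt hk)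
      have hle : Finsupp.single i 1 ≤ a := Finsupp.single_le_iff.2 (Nat.one_le_iff_ne_zero.2 hai)
      obtain ⟨c, rfl⟩ := exists_add_of_le hle
      obtain ⟨b, hb, hbc⟩ := ih (a := c).2 <| by
        simpa [Finset.sum_add_distrib, Finsupp.single_apply, hi, Nat.lt_one_add_iff] using hk
      exact ⟨_, ⟨b, hb, _, ⟨i, hi, rfl⟩, rfl⟩, by rw [add_comm b]; gcongr⟩

theorem span_X_image_pow (R : Type*) [CommSemiring R] (s : Finset σ) (k : ℕ) :
    Ideal.span ((X : σ → MvPolynomial σ R) '' s) ^ k =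
      restrictSupportIdeal R {a | k ≤ ∑ i ∈ s, a i}
        (fun _ _ hab ha => le_trans ha (Finset.sum_le_sum fun i _ => hab i)) := by
  have h : (X : σ → MvPolynomial σ R) '' s =
      (fun a => monomial a (1 : R)) '' ((fun i => Finsupp.single i 1) '' (s : Set σ)) := by
    rw [Set.image_image]
    rfl
  simp only [h, span_monomial_image_pow]
  congr 1
  ext a
  exact mem_upperClosure_nsmul_image_single_iff

theorem span_image_X_pow (R : Type*) [CommSemiring R] (s : Set σ) (k : ℕ) :
    Ideal.span ((fun i => (X i : MvPolynomial σ R) ^ k) '' s) =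
      restrictSupportIdeal R {a | ∃ i ∈ s, k ≤ a i}
        (fun _ _ hab ⟨i, hi, hk⟩ => ⟨i, hi, hk.trans (hab i)⟩) := by
  have h : (fun i => (X i : MvPolynomial σ R) ^ k) '' s =
      (fun a => monomial a (1 : R)) '' ((fun i => Finsupp.single i k) '' s) := by
    simp only [Set.image_image, X_pow_eq_monomial]
  simp only [h, span_monomial_image_eq_restrictSupportIdeal]
  congr 1
  ext a
  simp [mem_upperClosure]

theorem span_X_image_injective (R : Type*) [CommSemiring R] [Nontrivial R] :
    Function.Injective fun s : Set σ => Ideal.span ((X : σ → MvPolynomial σ R) '' s) := by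
  have X_mem_iff (s : Set σ) (i : σ) :
      (X i : MvPolynomial σ R) ∈ Ideal.span (X '' s) ↔ i ∈ s := by
    classical
    simp [mem_ideal_span_X_image, support_X, Finsupp.single_apply]
  intro s t (hst : Ideal.span _ = Ideal.span _)
  ext i
  rw [← X_mem_iff, hst, X_mem_iff]

theorem restrictSupport_sup_compl (R : Type*) [CommSemiring R] (U : Set (σ →₀ ℕ)) :
    restrictSupport R U ⊔ restrictSupport R Uᶜ = ⊤ := by
  rw [restrictSupport_eq_span, restrictSupport_eq_span, ← Submodule.span_union,
    ← Set.image_union, Set.union_compl_self, ← restrictSupport_eq_span, restrictSupport_univ]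

theorem span_X_image_le_radical_restrictSupportIdeal [CommSemiring R] {s : Set σ}
    {U : Set (σ →₀ ℕ)} (hU : IsUpperSet U) (hX : ∀ i ∈ s, ∃ k, Finsupp.single i k ∈ U) :
    Ideal.span (X '' s) ≤ (restrictSupportIdeal R U hU).radical := by
  rw [Ideal.span_le]
  rintro _ ⟨i, hi, rfl⟩
  obtain ⟨k, hk⟩ := hX i hi
  exact ⟨k, X_pow_eq_monomial (R := R) ▸ (monomial_mem_restrictSupport R).2 (.inl hk)⟩

section Primary

variable [CommRing R] [NoZeroDivisors R] {s : Set σ} {U : Set (σ →₀ ℕ)} (hU : IsUpperSet U)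
  (hs : ∀ ⦃a b : σ →₀ ℕ⦄, Set.EqOn a b s → a ∈ U → b ∈ U)

include hs in
theorem mem_restrictSupportIdeal_of_mul_mem {f c : MvPolynomial σ R} (hc : c ≠ 0)
    (hcs : c ∈ restrictSupport R {b | ∀ i ∈ s, b i = 0})
    (hfc : f * c ∈ restrictSupportIdeal R U hU) : f ∈ restrictSupportIdeal R U hU := by
  obtain ⟨g, hg, h, hh, rfl⟩ :=
    Submodule.mem_sup.1 (restrictSupport_sup_compl R U ▸ Submodule.mem_top (x := f))
  have hhcU : h * c ∈ restrictSupportIdeal R U hU := by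
    rw [add_mul] at hfc
    exact (Submodule.add_mem_iff_right _ (Ideal.mul_mem_right c _ hg)).1 hfc
  -- Multiplication by `c` leaves the `s`-coordinates of an exponent unchanged.
  have hhcU' : h * c ∈ restrictSupport R Uᶜ := by
    have mem_mul := Submodule.mul_mem_mul hh hcs
    rw [← restrictSupport_add] at mem_mul
    refine restrictSupport_mono R ?_ mem_mul
    rintro _ ⟨a, ha, b, hb, rfl⟩ hab
    exact ha (hs (fun i hi => by simp [hb i hi]) hab)
  have hhc : h * c = 0 := support_eq_empty.1 <|
    Finset.eq_empty_of_forall_notMem fun a ha => hhcU' ha (hhcU ha)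
  rw [(mul_eq_zero_iff_right hc).1 hhc, add_zero]
  exact hg

variable (hX : ∀ i ∈ s, ∃ k, Finsupp.single i k ∈ U)

include hs hX in
theorem mem_restrictSupportIdeal_of_mul_mem_of_notMem {f g : MvPolynomial σ R}
    (hg : g ∉ Ideal.span (X '' s)) (hfg : f * g ∈ restrictSupportIdeal R U hU) :
    f ∈ restrictSupportIdeal R U hU := by
  obtain ⟨p, hp, c, hc, rfl⟩ := Submodule.mem_sup.1
    (restrictSupport_sup_compl R {b | ∃ i ∈ s, b i ≠ 0} ▸ Submodule.mem_top (x := g))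
  replace hp : p ∈ Ideal.span (X '' s) := mem_ideal_span_X_image.2 fun _ ha => hp ha
  replace hc : c ∈ restrictSupport R {b | ∀ i ∈ s, b i = 0} := fun b hb i hi => by
    simpa using fun h : b i ≠ 0 => hc hb ⟨i, hi, h⟩
  have hc0 : c ≠ 0 := by
    rintro rfl
    exact hg (by rwa [add_zero])
  obtain ⟨k, hk⟩ := span_X_image_le_radical_restrictSupportIdeal hU hX hp
  have descend (m : ℕ) (hm : f * p ^ m ∈ restrictSupportIdeal R U hU) :
      f ∈ restrictSupportIdeal R U hU := by
    induction m with
    | zero => simpa using hm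
    | succ m ih =>
      refine ih (mem_restrictSupportIdeal_of_mul_mem hU hs hc0 hc ?_)
      have : f * p ^ m * c = f * (p + c) * p ^ m - f * p ^ (m + 1) := by ring
      exact this ▸ sub_mem (Ideal.mul_mem_right _ _ hfg) hm
  exact descend k (Ideal.mul_mem_left _ f hk)

variable [Nontrivial R] (h0 : 0 ∉ U)

include hs hX h0

theorem radical_restrictSupportIdeal :
    (restrictSupportIdeal R U hU).radical = Ideal.span (X '' s) := by
  refine le_antisymm (fun f ⟨k, hk⟩ => ?_) (span_X_image_le_radical_restrictSupportIdeal hU hX)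
  by_contra hf
  have one_mem : (1 : MvPolynomial σ R) ∈ restrictSupportIdeal R U hU := by
    induction k with
    | zero => simpa using hk
    | succ k ih =>
      exact ih (mem_restrictSupportIdeal_of_mul_mem_of_notMem hU hs hX hf (pow_succ f k ▸ hk))
  exact h0 (monomial_mem_restrictSupportIdeal_iff.1 one_mem)

theorem isPrimary_restrictSupportIdeal : (restrictSupportIdeal R U hU).IsPrimary := by
  refine Ideal.isPrimary_iff.2 ⟨fun h => ?_, fun {f g} hfg => ?_⟩
  · have one_mem : monomial 0 (1 : R) ∈ restrictSupportIdeal R U hU := h ▸ Submodule.mem_top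
    exact h0 (monomial_mem_restrictSupportIdeal_iff.1 one_mem)
  · rw [radical_restrictSupportIdeal hU hs hX h0]
    exact or_iff_not_imp_right.2 fun hg =>
      mem_restrictSupportIdeal_of_mul_mem_of_notMem hU hs hX hg hfg

end Primary

end MonomialIdeals

section OddCycles

open SimpleGraph

/-- The cycle of length `k`, with `ZMod k` as vertex set to match `IsInducedOddCycle`. -/
abbrev zmodCycle (k : ℕ) : SimpleGraph (ZMod k) :=
  circulantGraph {1}

theorem zmodCycle_adj_iff {k : ℕ} (hk : k ≠ 1) {i j : ZMod k} :
    (zmodCycle k).Adj i j ↔ j = i + 1 ∨ i = j + 1 := by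
  have : Nontrivial (ZMod k) := ZMod.nontrivial_iff.2 hk
  rw [circulantGraph_adj, or_comm]
  simp only [Set.mem_singleton_iff, sub_eq_iff_eq_add']
  refine and_iff_right_of_imp ?_
  rintro (rfl | rfl) <;> simp

theorem zmod_val_add_one_of_add_one_ne_zero {k : ℕ} [NeZero k] {i : ZMod k} (hi : i + 1 ≠ 0) :
    (i + 1).val = i.val + 1 := by
  have natCast_succ : ((i.val + 1 : ℕ) : ZMod k) = i + 1 := by simp
  have hlt : i.val + 1 < k := (Nat.succ_le_of_lt i.val_lt).lt_of_ne fun h => hi <| by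
    rw [← natCast_succ, ← Nat.succ_eq_add_one, h, ZMod.natCast_self]
  rw [← natCast_succ, ZMod.val_natCast_of_lt hlt]

theorem zmod_val_add_one_of_add_one_eq_zero {k : ℕ} [NeZero k] {i : ZMod k} (hi : i + 1 = 0) :
    i.val + 1 = k :=
  le_antisymm i.val_lt <| Nat.le_of_dvd i.val.succ_pos <|
    (ZMod.natCast_eq_zero_iff _ _).1 (by simpa using hi)

variable {V : Type*} {G : SimpleGraph V} {k : ℕ}

theorem nonempty_hom_of_closedWalk {u : V} (w : G.Walk u u) (hw : w.length ≠ 0) :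
    Nonempty (zmodCycle w.length →g G) := by
  have : NeZero w.length := ⟨hw⟩
  have adj_succ (i : ZMod w.length) : G.Adj (w.getVert i.val) (w.getVert (i + 1).val) := by
    have getVert_succ : w.getVert (i + 1).val = w.getVert (i.val + 1) := by
      by_cases hi : i + 1 = 0
      · rw [zmod_val_add_one_of_add_one_eq_zero hi, hi, ZMod.val_zero, w.getVert_zero,
          w.getVert_length]
      · rw [zmod_val_add_one_of_add_one_ne_zero hi]
    exact getVert_succ ▸ w.adj_getVert_succ i.val_lt
  refine ⟨⟨fun i => w.getVert i.val, fun {i j} hij => ?_⟩⟩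
  rcases hij.2 with h | h
  · exact sub_eq_iff_eq_add'.1 h ▸ (adj_succ _).symm
  · exact sub_eq_iff_eq_add'.1 h ▸ adj_succ _

theorem exists_walk_of_hom_zmodCycle (hk : k ≠ 1) (f : zmodCycle k →g G) (i : ZMod k) (m : ℕ) :
    ∃ w : G.Walk (f i) (f (i + m)), w.length = m := by
  induction m with
  | zero => exact ⟨Walk.nil.copy rfl (by simp), by simp⟩
  | succ m ih =>
    obtain ⟨w, hw⟩ := ih
    have adj := f.map_adj ((zmodCycle_adj_iff hk).2 (.inl (add_assoc i m 1).symm))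
    exact ⟨(w.concat adj).copy rfl (by simp), by simp [hw]⟩

theorem exists_walk_length_eq_val_sub [NeZero k] (hk : k ≠ 1) (f : zmodCycle k →g G)
    (i j : ZMod k) : ∃ w : G.Walk (f i) (f j), w.length = (j - i).val := by
  obtain ⟨w, hw⟩ := exists_walk_of_hom_zmodCycle hk f i (j - i).val
  exact ⟨w.copy rfl (by simp), by simpa using hw⟩

theorem not_colorable_two_of_hom_zmodCycle (hk : k ≠ 1) (hodd : Odd k) (f : zmodCycle k →g G) :
    ¬ G.Colorable 2 := by
  obtain ⟨w, hw⟩ := exists_walk_of_hom_zmodCycle hk f 0 k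
  rw [two_colorable_iff_forall_loop_even]
  intro h
  have := h _ (w.copy rfl (by simp))
  rw [Walk.length_copy, hw] at this
  exact Nat.not_even_iff_odd.2 hodd this

theorem colorable_two_of_hom_zmodCycle_of_ne [NeZero k] (hk : k ≠ 1) (f : G →g zmodCycle k)
    {i : ZMod k} (hf : ∀ v, f v ≠ i) : G.Colorable 2 := by
  have parity_ne {u v : V} (h : f v = f u + 1) :
      ((f u - i).val : ZMod 2) ≠ ((f v - i).val : ZMod 2) := by
    have hsub : f v - i = (f u - i) + 1 := by rw [h]; ring
    rw [hsub, zmod_val_add_one_of_add_one_ne_zero (hsub ▸ sub_ne_zero.2 (hf v))]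
    simp
  refine ⟨Coloring.mk (fun v => ((f v - i).val : ZMod 2)) fun {u v} huv => ?_⟩
  rcases (zmodCycle_adj_iff hk).1 (f.map_adj huv) with h | h
  · exact parity_ne h
  · exact (parity_ne h).symm

section Shortest

variable (hodd : Odd k) (hmin : ∀ u, ∀ w : G.Walk u u, Odd w.length → k ≤ w.length)
include hodd hmin

theorem injective_of_le_odd_closedWalk_length (hk : k ≠ 1) (f : zmodCycle k →g G) :
    Function.Injective f := by
  have : NeZero k := ⟨hodd.pos.ne'⟩
  intro i j hij
  by_contra hne
  -- Both arcs between `i` and `j` map to closed walks, and one of them has odd length below `k`.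
  obtain ⟨w, hw⟩ := exists_walk_length_eq_val_sub hk f i j
  obtain ⟨w', hw'⟩ := exists_walk_length_eq_val_sub hk f j i
  have hle := hmin _ (w.copy rfl hij.symm)
  have hle' := hmin _ (w'.copy rfl hij)
  rw [Walk.length_copy, hw] at hle
  rw [Walk.length_copy, hw', ← neg_sub, ZMod.neg_val, if_neg (sub_ne_zero.2 (Ne.symm hne))]
    at hle'
  have hlt := (j - i).val_lt
  have hpos : (j - i).val ≠ 0 := (ZMod.val_ne_zero _).2 (sub_ne_zero.2 (Ne.symm hne))
  grind

theorem adj_of_le_odd_closedWalk_length (hk : k ≠ 1) (f : zmodCycle k →g G) {i j : ZMod k}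
    (hij : G.Adj (f i) (f j)) : (zmodCycle k).Adj i j := by
  have : NeZero k := ⟨hodd.pos.ne'⟩
  have : Fact (1 < k) := ⟨by grind⟩
  have hne : i ≠ j := fun h => hij.ne (congrArg f h)
  -- Completed by the edge, the even one of the two arcs is an odd closed walk, so it has length
  -- at least `k - 1` and the other arc has length `1`.
  obtain ⟨w, hw⟩ := exists_walk_length_eq_val_sub hk f i j
  obtain ⟨w', hw'⟩ := exists_walk_length_eq_val_sub hk f j i
  have hle := hmin _ (w.concat hij.symm)
  have hle' := hmin _ (w'.concat hij)
  have hadd : (j - i).val + (i - j).val = k := by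
    rw [← neg_sub j i, ZMod.neg_val, if_neg (sub_ne_zero.2 hne.symm)]
    exact Nat.add_sub_of_le (j - i).val_lt.le
  rw [Walk.length_concat, hw] at hle
  rw [Walk.length_concat, hw'] at hle'
  have hval : (i - j).val = (1 : ZMod k).val ∨ (j - i).val = (1 : ZMod k).val := by
    rw [ZMod.val_one]
    grind
  exact ⟨hne, hval.imp (ZMod.val_injective k ·) (ZMod.val_injective k ·)⟩

end Shortest

theorem exists_embedding_zmodCycle_of_not_colorable_two (h : ¬ G.Colorable 2) :
    ∃ k, 3 ≤ k ∧ Odd k ∧ Nonempty (zmodCycle k ↪g G) := by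
  classical
  rw [two_colorable_iff_forall_loop_even] at h
  push Not at h
  have hex : ∃ k, Odd k ∧ ∃ u, ∃ w : G.Walk u u, w.length = k := by
    obtain ⟨u, w, hw⟩ := h
    exact ⟨_, Nat.not_even_iff_odd.1 hw, u, w, rfl⟩
  obtain ⟨hodd, u, w, hw⟩ := Nat.find_spec hex
  have hmin (v : V) (w' : G.Walk v v) (hw' : Odd w'.length) : w.length ≤ w'.length :=
    hw ▸ Nat.find_min' hex ⟨hw', v, w', rfl⟩
  rw [← hw] at hodd
  have hk : w.length ≠ 1 := fun h => (Walk.adj_of_length_eq_one h).ne rfl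
  obtain ⟨f⟩ := nonempty_hom_of_closedWalk w hodd.pos.ne'
  exact ⟨w.length, by grind, hodd, ⟨⟨f, injective_of_le_odd_closedWalk_length hodd hmin hk f⟩,
    ⟨adj_of_le_odd_closedWalk_length hodd hmin hk f, f.map_adj⟩⟩⟩

theorem minimal_not_colorable_two_iff {s : Set V} :
    Minimal (fun s : Set V => ¬ (G.induce s).Colorable 2) s ↔
      ∃ k, 3 ≤ k ∧ Odd k ∧ Nonempty (zmodCycle k ≃g G.induce s) := by
  constructor
  · intro hs
    obtain ⟨k, hk, hodd, ⟨f⟩⟩ := exists_embedding_zmodCycle_of_not_colorable_two hs.prop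
    let t : Set V := Set.range fun i => (f i : V)
    have hts : t ⊆ s := Set.range_subset_iff.2 fun i => (f i).2
    have ht : ¬ (G.induce t).Colorable 2 := not_colorable_two_of_hom_zmodCycle (by omega) hodd
      ⟨fun i => ⟨f i, Set.mem_range_self i⟩, fun hij => f.map_adj_iff.2 hij⟩
    have surj : Function.Surjective f := fun v =>
      (hs.le_of_le ht hts v.2).imp fun i hi => Subtype.ext hi
    exact ⟨k, hk, hodd, ⟨RelIso.ofSurjective f surj⟩⟩
  · rintro ⟨k, hk, hodd, ⟨f⟩⟩
    have : NeZero k := ⟨hodd.pos.ne'⟩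
    refine ⟨not_colorable_two_of_hom_zmodCycle (by omega) hodd f.toHom, fun t ht hts v hv => ?_⟩
    by_contra hvt
    refine ht (colorable_two_of_hom_zmodCycle_of_ne (k := k) (i := f.symm ⟨v, hv⟩) (by omega)
      (f.symm.toHom.comp (G.induceHomOfLE hts).toHom) fun u hu => hvt ?_)
    have hu : (u : V) = v := congrArg Subtype.val (f.symm.injective hu)
    exact hu ▸ u.2

end OddCycles

section CoverIdeal

open SimpleGraph

theorem exists_isVertexCover_indicator_add_le_iff {V : Type*} {G : SimpleGraph V} {a : V → ℕ} :
    (∃ c d : Set V, G.IsVertexCover c ∧ G.IsVertexCover d ∧ c.indicator 1 + d.indicator 1 ≤ a) ↔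
      (∀ u v, G.Adj u v → 2 ≤ a u + a v) ∧ (G.induce {v | a v ≤ 1}).Colorable 2 := by
  classical
  constructor
  · rintro ⟨c, d, hc, hd, hle⟩
    replace hle (v : V) : (if v ∈ c then 1 else 0) + (if v ∈ d then 1 else 0) ≤ a v := by
      simpa [Set.indicator_apply] using hle v
    refine ⟨fun u v huv => ?_, ?_⟩
    · have := hle u
      have := hle v
      have := hc huv
      have := hd huv
      grind
    · let C : (G.induce {v | a v ≤ 1}).Coloring Prop := Coloring.mk (fun v => ↑v ∈ c) ?_
      · simpa using C.colorable
      · rintro ⟨u, hu : a u ≤ 1⟩ ⟨v, hv : a v ≤ 1⟩ (huv : G.Adj u v)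
        have := hle u
        have := hle v
        have := hc huv
        have := hd huv
        grind
  · rintro ⟨hadj, ⟨C⟩⟩
    -- Both covers contain the vertices of weight at least `2`; those of weight `1` are split
    -- between them by colour.
    let c (t : Fin 2) : Set V := {v | ∀ h : a v ≤ 1, a v = 1 ∧ C ⟨v, h⟩ = t}
    have isVertexCover (t : Fin 2) : G.IsVertexCover (c t) := by
      intro u v huv
      by_contra! h
      obtain ⟨⟨hu, hu'⟩, hv, hv'⟩ : (∃ hu : a u ≤ 1, a u = 1 → C ⟨u, hu⟩ ≠ t) ∧
          ∃ hv : a v ≤ 1, a v = 1 → C ⟨v, hv⟩ ≠ t := by simpa [c] using h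
      have := hadj u v huv
      have hC : C ⟨u, hu⟩ ≠ C ⟨v, hv⟩ := C.valid huv
      grind
    refine ⟨c 0, c 1, isVertexCover 0, isVertexCover 1, fun v => ?_⟩
    simp only [Pi.add_apply, Set.indicator_apply, Pi.one_apply]
    grind

/-- The exponents of the squarefree monomials corresponding to the vertex covers of `G`. -/
def coverExponents {V : Type*} (G : SimpleGraph V) : Set (V →₀ ℕ) :=
  {a | ∃ c, G.IsVertexCover c ∧ ⇑a = c.indicator 1}

/-- The graph `G` as a `SimpleGraph`, for use of Mathlib's walks and colourings. -/
def GraphOn.toSimpleGraph {n : ℕ} (G : GraphOn n) : SimpleGraph (Fin n) where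
  Adj u v := {u, v} ∈ G.edges
  symm := ⟨fun u v h => Finset.pair_comm u v ▸ h⟩
  loopless := ⟨fun v h => by simpa using G.card_eq _ h⟩

variable {n : ℕ} {G : GraphOn n}

theorem GraphOn.exists_adj_of_mem_edges {e : Finset (Fin n)} (he : e ∈ G.edges) :
    ∃ u v, G.toSimpleGraph.Adj u v ∧ e = {u, v} := by
  obtain ⟨u, v, -, rfl⟩ := Finset.card_eq_two.1 (G.card_eq e he)
  exact ⟨u, v, he, rfl⟩

theorem isCover_iff_isVertexCover {w : Finset (Fin n)} :
    IsCover G w ↔ G.toSimpleGraph.IsVertexCover (w : Set (Fin n)) := by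
  constructor
  · intro hw u v huv
    obtain ⟨x, hx⟩ := hw _ huv
    grind
  · intro hw e he
    obtain ⟨u, v, huv, rfl⟩ := GraphOn.exists_adj_of_mem_edges he
    rcases hw huv with h | h
    · exact ⟨u, by simpa using h⟩
    · exact ⟨v, by simpa using h⟩

theorem isInducedOddCycle_iff_nonempty_iso {W : Finset (Fin n)} :
    IsInducedOddCycle G W ↔ ∃ k, 3 ≤ k ∧ Odd k ∧
      Nonempty (zmodCycle k ≃g G.toSimpleGraph.induce (W : Set (Fin n))) := by
  constructor
  · rintro ⟨hcard, hodd, f, hinj, hmem, hsurj, hedge, hedge'⟩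
    have adj_iff {i j : ZMod W.card} :
        G.toSimpleGraph.Adj (f i) (f j) ↔ (zmodCycle W.card).Adj i j := by
      rw [zmodCycle_adj_iff (by omega)]
      constructor
      · intro h
        obtain ⟨l, hl⟩ := hedge' _ h (by simp [Finset.insert_subset_iff, hmem])
        rw [← Finset.coe_inj] at hl
        push_cast at hl
        rcases Set.pair_eq_pair_iff.1 hl with ⟨hi, hj⟩ | ⟨hi, hj⟩
        · exact .inl (by rw [hinj hi, hinj hj])
        · exact .inr (by rw [hinj hi, hinj hj])
      · rintro (rfl | rfl)
        · exact hedge i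
        · exact G.toSimpleGraph.adj_symm (hedge j)
    let φ : ZMod W.card ≃ (W : Set (Fin n)) := .ofBijective (fun i => ⟨f i, hmem i⟩)
      ⟨fun i j h => hinj (congrArg Subtype.val h), fun ⟨w, hw⟩ =>
        (hsurj w hw).imp fun i hi => Subtype.ext hi⟩
    exact ⟨W.card, hcard, hodd, ⟨⟨φ, adj_iff⟩⟩⟩
  · rintro ⟨k, hk, hodd, ⟨φ⟩⟩
    obtain rfl : k = W.card := by simpa using Nat.card_congr φ.toEquiv
    refine ⟨hk, hodd, fun i => φ i, Subtype.val_injective.comp φ.injective, fun i => (φ i).2,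
      fun w hw => (φ.surjective ⟨w, hw⟩).imp fun i hi => congrArg Subtype.val hi,
      fun i => φ.map_adj_iff.2 ((zmodCycle_adj_iff (by omega)).2 (.inl rfl)), fun e he heW => ?_⟩
    obtain ⟨u, v, huv, rfl⟩ := GraphOn.exists_adj_of_mem_edges he
    obtain ⟨i, hi⟩ := φ.surjective ⟨u, heW (by simp)⟩
    obtain ⟨j, hj⟩ := φ.surjective ⟨v, heW (by simp)⟩
    have hij : (zmodCycle W.card).Adj i j := φ.map_adj_iff.1 (by simpa [hi, hj] using huv)
    rcases (zmodCycle_adj_iff (by omega)).1 hij with rfl | rfl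
    · exact ⟨i, by simp only [hi, hj]⟩
    · exact ⟨j, by simp only [hi, hj, Finset.pair_comm u v]⟩

theorem isInducedOddCycle_iff_minimal {W : Finset (Fin n)} :
    IsInducedOddCycle G W ↔
      Minimal (fun s : Set (Fin n) => ¬ (G.toSimpleGraph.induce s).Colorable 2) W :=
  isInducedOddCycle_iff_nonempty_iso.trans minimal_not_colorable_two_iff.symm

theorem IsInducedOddCycle.eq_of_subset {W W' : Finset (Fin n)} (hW : IsInducedOddCycle G W)
    (hW' : IsInducedOddCycle G W') (h : W' ⊆ W) : W' = W :=
  Finset.coe_injective <| (isInducedOddCycle_iff_minimal.1 hW).eq_of_subset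
    (isInducedOddCycle_iff_minimal.1 hW').prop (Finset.coe_subset.2 h)

theorem colorable_two_induce_iff_forall_isInducedOddCycle {s : Set (Fin n)} :
    (G.toSimpleGraph.induce s).Colorable 2 ↔
      ∀ W : Finset (Fin n), IsInducedOddCycle G W → ¬ (W : Set (Fin n)) ⊆ s := by
  constructor
  · exact fun hs W hW hWs =>
      (isInducedOddCycle_iff_minimal.1 hW).prop (hs.of_hom (induceHomOfLE _ hWs).toHom)
  · intro h
    by_contra hs
    obtain ⟨t, hts, ht⟩ := exists_minimal_le_of_wellFoundedLT
      (fun s : Set (Fin n) => ¬ (G.toSimpleGraph.induce s).Colorable 2) s hs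
    lift t to Finset (Fin n) using t.toFinite
    exact h t (isInducedOddCycle_iff_minimal.2 ht) hts

theorem monomial_one_eq_prod_X {σ R : Type*} [CommSemiring R] {a : σ →₀ ℕ} {w : Finset σ}
    (ha : ⇑a = (w : Set σ).indicator 1) : monomial a (1 : R) = ∏ i ∈ w, X i := by
  classical
  have support_eq : a.support = w := by
    ext i
    simp [ha, Set.indicator_apply]
  rw [monomial_eq, C_1, one_mul, Finsupp.prod, support_eq]
  exact Finset.prod_congr rfl fun i hi => by simp [ha, hi]

theorem coverIdeal_eq_span_monomial_image (K : Type*) [Field K] (G : GraphOn n) :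
    coverIdeal K G =
      Ideal.span ((fun a => monomial a (1 : K)) '' coverExponents G.toSimpleGraph) := by
  rw [coverIdeal]
  congr 1
  ext p
  constructor
  · rintro ⟨w, hw, rfl⟩
    exact ⟨Finsupp.equivFunOnFinite.symm _, ⟨w, isCover_iff_isVertexCover.1 hw, rfl⟩,
      monomial_one_eq_prod_X rfl⟩
  · rintro ⟨a, ⟨c, hc, ha⟩, rfl⟩
    lift c to Finset (Fin n) using c.toFinite
    exact ⟨c, isCover_iff_isVertexCover.2 hc, monomial_one_eq_prod_X ha⟩

open scoped Pointwise in
theorem mem_upperClosure_two_nsmul_coverExponents_iff {a : Fin n →₀ ℕ} :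
    a ∈ upperClosure (2 • coverExponents G.toSimpleGraph) ↔
      (∀ e ∈ G.edges, 2 ≤ ∑ i ∈ e, a i) ∧ ∀ W, IsInducedOddCycle G W → ∃ i ∈ W, 2 ≤ a i := by
  have exists_iff : a ∈ upperClosure (2 • coverExponents G.toSimpleGraph) ↔
      ∃ c d : Set (Fin n), G.toSimpleGraph.IsVertexCover c ∧ G.toSimpleGraph.IsVertexCover d ∧
        c.indicator 1 + d.indicator 1 ≤ ⇑a := by
    simp only [mem_upperClosure, two_nsmul, Set.mem_add]
    constructor
    · rintro ⟨_, ⟨b, ⟨c, hc, hb⟩, b', ⟨d, hd, hb'⟩, rfl⟩, hle⟩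
      exact ⟨c, d, hc, hd, hb ▸ hb' ▸ hle⟩
    · rintro ⟨c, d, hc, hd, hle⟩
      exact ⟨_, ⟨Finsupp.equivFunOnFinite.symm _, ⟨c, hc, rfl⟩,
        Finsupp.equivFunOnFinite.symm _, ⟨d, hd, rfl⟩, rfl⟩, hle⟩
  rw [exists_iff, exists_isVertexCover_indicator_add_le_iff,
    colorable_two_induce_iff_forall_isInducedOddCycle]
  refine and_congr ⟨fun h e he => ?_, fun h u v huv => ?_⟩ (forall₂_congr fun W _ => ?_)
  · obtain ⟨u, v, huv, rfl⟩ := GraphOn.exists_adj_of_mem_edges he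
    rw [Finset.sum_pair huv.ne]
    exact h u v huv
  · rw [← Finset.sum_pair huv.ne]
    exact h _ huv
  · simp [Set.not_subset, Nat.lt_iff_add_one_le]

namespace DecompIndex

/-- The set of variables involved in the component indexed by `i`: the edge or the odd cycle. -/
def vertexSet : DecompIndex G → Finset (Fin n)
  | Sum.inl e => e.1
  | Sum.inr W => W.1

/-- The exponents of the monomials in the component indexed by `i`, as conditions that a
vertex weighting has to satisfy. -/
def exponents : DecompIndex G → Set (Fin n →₀ ℕ)
  | Sum.inl e => {a | 2 ≤ ∑ x ∈ e.1, a x}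
  | Sum.inr W => {a | ∃ x ∈ W.1, 2 ≤ a x}

theorem isUpperSet_exponents : ∀ i : DecompIndex G, IsUpperSet i.exponents
  | Sum.inl _ => fun _ _ hab ha => le_trans ha (Finset.sum_le_sum fun x _ => hab x)
  | Sum.inr _ => fun _ _ hab ⟨x, hx, ha⟩ => ⟨x, hx, ha.trans (hab x)⟩

theorem mem_exponents_of_eqOn {i : DecompIndex G} {a b : Fin n →₀ ℕ}
    (hab : Set.EqOn a b i.vertexSet) (ha : a ∈ i.exponents) : b ∈ i.exponents := by
  rcases i with e | W
  · exact ha.trans_eq (Finset.sum_congr rfl hab)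
  · obtain ⟨x, hx, hax⟩ := ha
    exact ⟨x, hx, hab hx ▸ hax⟩

theorem mem_exponents_of_two_le {i : DecompIndex G} {a : Fin n →₀ ℕ} {x : Fin n}
    (hx : x ∈ i.vertexSet) (hax : 2 ≤ a x) : a ∈ i.exponents := by
  rcases i with e | W
  · exact hax.trans (Finset.single_le_sum (fun _ _ => Nat.zero_le _) hx)
  · exact ⟨x, hx, hax⟩

theorem zero_notMem_exponents (i : DecompIndex G) : 0 ∉ i.exponents := by
  rcases i with e | W <;> simp [exponents]

theorem eq_inl_of_vertexSet_subset {e : {e // e ∈ G.edges}} {i : DecompIndex G}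
    (h : i.vertexSet ⊆ e.1) : i = Sum.inl e := by
  have he := G.card_eq _ e.2
  rcases i with e' | W
  · exact congrArg Sum.inl <| Subtype.ext <|
      Finset.eq_of_subset_of_card_le h (he.trans (G.card_eq _ e'.2).symm).le
  · have := W.2.1.trans (Finset.card_le_card h)
    omega

theorem vertexSet_injective :
    Function.Injective (vertexSet : DecompIndex G → Finset (Fin n)) := by
  rintro (e | W) j h
  · exact (eq_inl_of_vertexSet_subset h.ge).symm
  · rcases j with e | W'
    · exact eq_inl_of_vertexSet_subset h.le
    · exact congrArg Sum.inr (Subtype.ext h)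

theorem exists_mem_exponents_iff_ne (i : DecompIndex G) :
    ∃ a, ∀ j : DecompIndex G, a ∈ j.exponents ↔ j ≠ i := by
  classical
  rcases i with e | W
  · let a : Fin n →₀ ℕ := Finsupp.equivFunOnFinite.symm fun x => if x ∈ e.1 then 0 else 2
    refine ⟨a, fun j => ⟨?_, fun hj => ?_⟩⟩
    · rintro ha rfl
      have : ∑ x ∈ e.1, a x = 0 := Finset.sum_eq_zero fun x hx => by simp [a, hx]
      simp [exponents, this] at ha
    · obtain ⟨x, hx, hxe⟩ := Finset.not_subset.1 (mt eq_inl_of_vertexSet_subset hj)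
      exact mem_exponents_of_two_le hx (by simp [a, hxe])
  · let a : Fin n →₀ ℕ := Finsupp.equivFunOnFinite.symm fun x => if x ∈ W.1 then 1 else 2
    refine ⟨a, fun j => ⟨?_, fun hj => ?_⟩⟩
    · rintro ha rfl
      obtain ⟨x, hx, hax⟩ := ha
      simp [a, hx] at hax
    · rcases j with e | W'
      · have one_le (x : Fin n) : 1 ≤ a x := by
          simp only [a, Finsupp.equivFunOnFinite_symm_apply_apply]
          split_ifs <;> omega
        calc 2 = ∑ _ ∈ e.1, 1 := by simp [G.card_eq _ e.2]
          _ ≤ ∑ x ∈ e.1, a x := Finset.sum_le_sum fun x _ => one_le x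
      · have hsub : ¬ W'.1 ⊆ W.1 := fun h =>
          hj (congrArg Sum.inr (Subtype.ext (W.2.eq_of_subset W'.2 h)))
        obtain ⟨x, hx, hxW⟩ := Finset.not_subset.1 hsub
        exact ⟨x, hx, by simp [a, hxW]⟩

end DecompIndex

theorem decompComponent_eq_restrictSupportIdeal (K : Type*) [Field K] (i : DecompIndex G) :
    decompComponent K G i = restrictSupportIdeal K i.exponents i.isUpperSet_exponents := by
  have setOf_eq_image (s : Finset (Fin n)) (f : Fin n → MvPolynomial (Fin n) K) :
      {p | ∃ x ∈ s, p = f x} = f '' s := by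
    ext p
    simp [eq_comm]
  rcases i with e | W
  · rw [decompComponent, setOf_eq_image, span_X_image_pow]
    rfl
  · rw [decompComponent, setOf_eq_image W.1 fun x => X x ^ 2, span_image_X_pow]
    rfl

theorem coverIdeal_sq_eq_restrictSupportIdeal (K : Type*) [Field K] (G : GraphOn n) :
    coverIdeal K G ^ 2 = restrictSupportIdeal K (⋂ i : DecompIndex G, i.exponents)
      (isUpperSet_iInter DecompIndex.isUpperSet_exponents) := by
  simp only [coverIdeal_eq_span_monomial_image, span_monomial_image_pow]
  congr 1
  ext a
  rw [SetLike.mem_coe, mem_upperClosure_two_nsmul_coverExponents_iff, Set.mem_iInter]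
  exact ⟨fun h => Sum.rec (fun e => h.1 e.1 e.2) fun W => h.2 W.1 W.2,
    fun h => ⟨fun e he => h (.inl ⟨e, he⟩), fun W hW => h (.inr ⟨W, hW⟩)⟩⟩

theorem isPrimary_decompComponent (K : Type*) [Field K] (i : DecompIndex G) :
    (decompComponent K G i).IsPrimary := by
  rw [decompComponent_eq_restrictSupportIdeal]
  exact isPrimary_restrictSupportIdeal _ (s := i.vertexSet)
    (fun _ _ => DecompIndex.mem_exponents_of_eqOn)
    (fun _ hx => ⟨2, DecompIndex.mem_exponents_of_two_le hx (by simp)⟩) i.zero_notMem_exponents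

theorem radical_decompComponent (K : Type*) [Field K] (i : DecompIndex G) :
    (decompComponent K G i).radical = Ideal.span (X '' i.vertexSet) := by
  rw [decompComponent_eq_restrictSupportIdeal]
  exact radical_restrictSupportIdeal _
    (fun _ _ => DecompIndex.mem_exponents_of_eqOn)
    (fun _ hx => ⟨2, DecompIndex.mem_exponents_of_two_le hx (by simp)⟩) i.zero_notMem_exponents

theorem radical_decompComponent_injective (K : Type*) [Field K] (G : GraphOn n) :
    Function.Injective fun i => (decompComponent K G i).radical := by
  intro i j h
  simp only [radical_decompComponent] at h
  exact DecompIndex.vertexSet_injective (Finset.coe_injective (span_X_image_injective K h))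

end CoverIdeal

/-- For a finite simple graph `G` with cover ideal `J = J(G)`, the
ideal `J²` has the irredundant primary decomposition
`J² = [⋂_{e ∈ E(G)} p_e²] ∩ [⋂_{W induced odd cycle} p_W^⟨2⟩]`:
the intersection of all components equals `J²`, every component is primary, the
components have pairwise distinct radicals, and no component can be omitted. -/
theorem coverIdeal_sq_primary_decomposition {n : ℕ} (K : Type*) [Field K] (G : GraphOn n) :
    (coverIdeal K G ^ 2 = ⨅ i : DecompIndex G, decompComponent K G i) ∧
    (∀ i : DecompIndex G, (decompComponent K G i).IsPrimary) ∧
    (∀ i j : DecompIndex G, i ≠ j →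
      (decompComponent K G i).radical ≠ (decompComponent K G j).radical) ∧
    (∀ i : DecompIndex G,
      (⨅ j ∈ {j : DecompIndex G | j ≠ i}, decompComponent K G j) ≠ coverIdeal K G ^ 2) := by
  refine ⟨?_, isPrimary_decompComponent K, fun i j => (radical_decompComponent_injective K G).ne,
    fun i h => ?_⟩
  · simp only [decompComponent_eq_restrictSupportIdeal, iInf_restrictSupportIdeal,
      coverIdeal_sq_eq_restrictSupportIdeal]
  · obtain ⟨a, ha⟩ := i.exists_mem_exponents_iff_ne
    have mem_iInf : monomial a (1 : K) ∈ ⨅ j ∈ {j | j ≠ i}, decompComponent K G j := by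
      simp only [Submodule.mem_iInf, decompComponent_eq_restrictSupportIdeal,
        monomial_mem_restrictSupportIdeal_iff]
      exact fun j hj => (ha j).2 hj
    rw [h, coverIdeal_sq_eq_restrictSupportIdeal, monomial_mem_restrictSupportIdeal_iff,
      Set.mem_iInter] at mem_iInf
    exact (ha i).1 (mem_iInf i) rfl
end

section
/- Let G be a simple hypergraph with edge ideal I = I(G) ⊆ S = K[x_1, ..., x_n]. The following conditions are equivalent: (1) G has the max-flow-min-cut property, i.e., the dual linear programming system max{⟨1, y⟩ : y ∈ ℝ^m_{≥0}, Ay ≤ c} = min{⟨c, z⟩ : z ∈ ℝ^n_{≥0}, A^T z ≥ 1} has integral optimal solutions y and z for every nonnegative integer vector c ∈ ℤ^n_{≥0}, where A is the incidence matrix of G; (2) I^{(q)} = I^q for all q ≥ 0; (3) the associated graded ring gr_I = ⊕_{q ≥ 0} I^q / I^{q+1} is reduced; (4) I is normally torsion-free, i.e., Ass(S/I^q) = Ass(S/I) for all q ≥ 1. -/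
open MvPolynomial

/-- The incidence matrix of the hypergraph with edges `E j`:
`A i j = 1` if `x_i ∈ e_j` and `0` otherwise. -/
def incMatrix {n m : ℕ} (E : Fin m → Finset (Fin n)) (i : Fin n) (j : Fin m) : ℕ :=
  if i ∈ E j then 1 else 0

/-- The edge ideal of the hypergraph with edges `E j`. -/
noncomputable def edgeIdealF {n m : ℕ} (K : Type*) [Field K] (E : Fin m → Finset (Fin n)) :
    Ideal (MvPolynomial (Fin n) K) :=
  Ideal.span {p | ∃ j : Fin m, p = ∏ i ∈ E j, X i}

/-- The `q`-th symbolic power of a squarefree monomial ideal: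
`I^{(q)} = ⋂_{p ∈ Ass(S/I)} p^q`. -/
noncomputable def symbPow {n : ℕ} {K : Type*} [Field K]
    (I : Ideal (MvPolynomial (Fin n) K)) (q : ℕ) : Ideal (MvPolynomial (Fin n) K) :=
  ⨅ p ∈ associatedPrimes (MvPolynomial (Fin n) K) (MvPolynomial (Fin n) K ⧸ I), p ^ q

/-- The ideal `I·R(I)` of the Rees algebra `R(I)`, generated by the elements of `I`
placed in degree `0`; the quotient `R(I)/I·R(I)` is the associated graded ring
`gr_I = ⊕_q I^q/I^{q+1}`. -/
noncomputable def grKernel {R : Type*} [CommRing R] (I : Ideal R) : Ideal (reesAlgebra I) :=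
  Ideal.span {x : reesAlgebra I | ∃ a ∈ I, (x : Polynomial R) = Polynomial.C a}

/-- The max-flow-min-cut property for the hypergraph with incidence matrix `A`:
for every nonnegative integer vector `c`, the dual linear programming system
`max {⟨1,y⟩ : y ≥ 0, Ay ≤ c} = min {⟨c,z⟩ : z ≥ 0, Aᵀz ≥ 1}` has integral optimal
solutions `y` and `z`. -/
def HasMFMC {n m : ℕ} (E : Fin m → Finset (Fin n)) : Prop :=
  ∀ c : Fin n → ℕ, ∃ (y : Fin m → ℕ) (z : Fin n → ℕ),
    (∀ i : Fin n, ∑ j : Fin m, y j * incMatrix E i j ≤ c i) ∧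
    (∀ j : Fin m, 1 ≤ ∑ i : Fin n, incMatrix E i j * z i) ∧
    (∀ y' : Fin m → ℝ, (∀ j, 0 ≤ y' j) →
      (∀ i : Fin n, ∑ j : Fin m, y' j * (incMatrix E i j : ℝ) ≤ (c i : ℝ)) →
      ∑ j : Fin m, y' j ≤ ∑ j : Fin m, (y j : ℝ)) ∧
    (∀ z' : Fin n → ℝ, (∀ i, 0 ≤ z' i) →
      (∀ j : Fin m, (1 : ℝ) ≤ ∑ i : Fin n, (incMatrix E i j : ℝ) * z' i) →
      ∑ i : Fin n, (c i : ℝ) * (z i : ℝ) ≤ ∑ i : Fin n, (c i : ℝ) * z' i) ∧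
    (∑ j : Fin m, (y j : ℝ)) = ∑ i : Fin n, (c i : ℝ) * (z i : ℝ)

/-!
Let `p_C` be the prime generated by the variables in a vertex cover `C`. The edge ideal `I` is the
intersection of the `p_C`, hence `I^{(q)}` that of the `p_C ^ q`. A monomial `x^c` lies in `I^{(q)}`
iff every vertex cover has `c`-weight at least `q`, while it lies in `I ^ q` iff `q` edges can be
packed into `c`. This turns max-flow-min-cut into `I^{(q)} = I ^ q`, monomial by monomial.

The order of vanishing along `p_C` is additive, so `f ^ 2 ∈ I^{(2q+1)}` forces `f ∈ I^{(q+1)}`; if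
symbolic and ordinary powers agree, this says that `gr_I` is reduced. Conversely, for any ideal of
a Noetherian ring with `gr_I` reduced, a minimal prime `P` of `gr_I` is the annihilator of some
`g ∉ P`. If `p` is the contraction of `P` to the base ring and `f ∈ I ^ q ∩ p ^ (q + 1)`, then
`f t^q · g ^ (q + 1)` vanishes in `gr_I`, because each factor of `f` in `p` gains one power of `I`
on a factor `g`. Hence `f t^q` lies in every such `P`, which means `f ∈ I ^ (q + 1)`.

Finally the `p_C ^ q` are primary, so `I^{(q)}` has only the minimal primes of `I` as associated
primes; and if the same holds for `I ^ q`, membership in `I ^ q` can be tested at these primes.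
-/

section AssociatedPrimes

variable {R : Type*} [CommRing R] {I J P p : Ideal R}

lemma minimalPrimes_iInf_subset_range {ι : Type*} [Finite ι] {p : ι → Ideal R}
    (hp : ∀ i, (p i).IsPrime) : (⨅ i, p i).minimalPrimes ⊆ Set.range p := by
  have := Fintype.ofFinite ι
  intro P hP
  obtain ⟨i, -, hi⟩ := hP.1.1.inf_le'.1 ((Finset.inf_univ_eq_iInf p).trans_le hP.1.2)
  exact ⟨i, le_antisymm hi (hP.2 ⟨hp i, iInf_le p i⟩ hi)⟩

lemma iInf_minimalPrimes_iInf_pow {ι : Type*} [Finite ι] {p : ι → Ideal R}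
    (hp : ∀ i, (p i).IsPrime) (q : ℕ) :
    ⨅ P ∈ (⨅ i, p i).minimalPrimes, P ^ q = ⨅ i, p i ^ q := by
  refine le_antisymm (le_iInf fun i ↦ ?_) (le_iInf₂ fun P hP ↦ ?_)
  · have := hp i
    obtain ⟨P, hP, hPi⟩ := Ideal.exists_minimalPrimes_le (iInf_le p i)
    exact (iInf₂_le P hP).trans (Ideal.pow_right_mono hPi q)
  · obtain ⟨i, rfl⟩ := minimalPrimes_iInf_subset_range hp hP
    exact iInf_le _ i

lemma bot_colon_singleton_quotient_mk (f : R) :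
    (⊥ : Submodule R (R ⧸ J)).colon {Ideal.Quotient.mk J f} = J.colon {f} := by
  ext a
  rw [Submodule.mem_colon_singleton, Submodule.mem_colon_singleton, Submodule.mem_bot,
    ← Ideal.Quotient.mk_eq_mk, ← Submodule.Quotient.mk_smul, Submodule.Quotient.mk_eq_zero]

variable [IsNoetherianRing R]

lemma mem_associatedPrimes_quotient_iff :
    P ∈ associatedPrimes R (R ⧸ J) ↔ P.IsPrime ∧ ∃ f, P = J.colon {f} := by
  simp only [AssociatedPrimes.mem_iff, isAssociatedPrime_iff,
    (Ideal.Quotient.mk_surjective (I := J)).exists, bot_colon_singleton_quotient_mk]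

lemma associatedPrimes_quotient_iInf_subset {ι : Type*} [Finite ι] (Q : ι → Ideal R) :
    associatedPrimes R (R ⧸ ⨅ i, Q i) ⊆ ⋃ i, associatedPrimes R (R ⧸ Q i) := by
  have := Fintype.ofFinite ι
  intro P hP
  obtain ⟨hprime, f, hf⟩ := mem_associatedPrimes_quotient_iff.1 hP
  rw [Submodule.iInf_colon] at hf
  obtain ⟨i, -, hi⟩ := hprime.inf_le'.1
    ((Finset.inf_univ_eq_iInf fun i ↦ (Q i).colon {f}).trans hf.symm).le
  exact Set.mem_iUnion.2 ⟨i, mem_associatedPrimes_quotient_iff.2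
    ⟨hprime, f, le_antisymm (hf.trans_le (iInf_le _ i)) hi⟩⟩

lemma minimalPrimes_subset_associatedPrimes_quotient :
    J.minimalPrimes ⊆ associatedPrimes R (R ⧸ J) := by
  simpa only [Ideal.annihilator_quotient] using
    Module.associatedPrimes.minimalPrimes_annihilator_subset_associatedPrimes R (R ⧸ J)

lemma associatedPrimes_quotient_eq_minimalPrimes_of_isPrimary_pow (hI : I.IsRadical) {q : ℕ}
    (hq : q ≠ 0) (hprimary : ∀ p ∈ I.minimalPrimes, (p ^ q).IsPrimary)
    (hpow : I ^ q = ⨅ p ∈ I.minimalPrimes, p ^ q) :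
    associatedPrimes R (R ⧸ I ^ q) = I.minimalPrimes := by
  apply Set.Subset.antisymm
  · have := (I.finite_minimalPrimes_of_isNoetherianRing).to_subtype
    rw [hpow, iInf_subtype']
    refine (associatedPrimes_quotient_iInf_subset _).trans (Set.iUnion_subset fun p ↦ ?_)
    rw [associatedPrimes.eq_singleton_of_isPrimary (hprimary p p.2), Ideal.radical_pow _ hq,
      p.2.1.1.radical]
    exact Set.singleton_subset_iff.2 p.2
  · refine Eq.trans_subset ?_ minimalPrimes_subset_associatedPrimes_quotient
    rw [← Ideal.radical_minimalPrimes (I := I ^ q), Ideal.radical_pow _ hq, hI.radical]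

lemma associatedPrimes_quotient_eq_minimalPrimes (hI : I.IsRadical) :
    associatedPrimes R (R ⧸ I) = I.minimalPrimes := by
  have h := associatedPrimes_quotient_eq_minimalPrimes_of_isPrimary_pow hI one_ne_zero
    (fun p hp ↦ by simpa only [pow_one] using hp.1.1.isPrimary)
    (by simp only [pow_one, ← sInf_eq_iInf, Ideal.sInf_minimalPrimes, hI.radical])
  rwa [pow_one] at h

lemma exists_notMem_eq_colon_of_mem_minimalPrimes (hI : I.IsRadical) (hp : p ∈ I.minimalPrimes) :
    ∃ s ∉ p, p = I.colon {s} := by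
  obtain ⟨hprime, s, hs⟩ := mem_associatedPrimes_quotient_iff.1
    (minimalPrimes_subset_associatedPrimes_quotient hp)
  refine ⟨s, fun hsp ↦ hprime.ne_top ?_, hs⟩
  have hsI : s ∈ I := by
    rw [hs, Submodule.mem_colon_singleton, smul_eq_mul, ← sq] at hsp
    exact hI ⟨2, hsp⟩
  rw [hs, Submodule.colon_eq_top_iff_subset, Set.singleton_subset_iff]
  exact hsI

lemma iInf_minimalPrimes_pow_le_of_associatedPrimes_subset (hI : I.IsRadical) {q : ℕ}
    (h : associatedPrimes R (R ⧸ I ^ q) ⊆ associatedPrimes R (R ⧸ I)) :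
    ⨅ p ∈ I.minimalPrimes, p ^ q ≤ I ^ q := by
  intro f hf
  by_contra hfI
  obtain ⟨P, hP, hfP⟩ := exists_le_isAssociatedPrime_of_isNoetherianRing R
    (Ideal.Quotient.mk (I ^ q) f) (mt Ideal.Quotient.eq_zero_iff_mem.1 hfI)
  have hPmin : P ∈ I.minimalPrimes := associatedPrimes_quotient_eq_minimalPrimes hI ▸ h hP
  obtain ⟨s, hs, hPs⟩ := exists_notMem_eq_colon_of_mem_minimalPrimes hI hPmin
  have hPsI : P * Ideal.span {s} ≤ I := by
    intro x hx
    obtain ⟨a, ha, rfl⟩ := Ideal.mem_mul_span_singleton.1 hx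
    rwa [hPs, Submodule.mem_colon_singleton] at ha
  have hsf : s ^ q * f ∈ I ^ q := by
    refine Ideal.pow_right_mono hPsI q ?_
    rw [mul_pow, Ideal.span_singleton_pow, mul_comm _ f]
    exact Ideal.mul_mem_mul ((Submodule.mem_iInf _).1 ((Submodule.mem_iInf _).1 hf P) hPmin)
      (Ideal.mem_span_singleton_self _)
  refine hs (hPmin.1.1.mem_of_pow_mem q (hfP ?_))
  rwa [bot_colon_singleton_quotient_mk, Submodule.mem_colon_singleton]

end AssociatedPrimes

section AssociatedGraded

open Finset.HasAntidiagonal (antidiagonal mem_antidiagonal)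

variable {R : Type*} [CommRing R] {I : Ideal R}

lemma monomial_mem_grKernel (i : ℕ) {a : R} (ha : a ∈ I ^ (i + 1)) :
    Polynomial.monomial i a ∈
      ((grKernel I).restrictScalars R).map (reesAlgebra I).val.toLinearMap := by
  suffices h : I * I ^ i ≤ (((grKernel I).restrictScalars R).map
      (reesAlgebra I).val.toLinearMap).comap (Polynomial.monomial i) by
    exact h (pow_succ' I i ▸ ha)
  refine Submodule.mul_le.2 fun b hb c hc ↦ ?_
  let bC : reesAlgebra I := algebraMap R _ b
  let cT : reesAlgebra I := ⟨_, reesAlgebra.monomial_mem.2 hc⟩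
  refine ⟨cT * bC, Ideal.mul_mem_left _ cT (Ideal.subset_span ⟨b, hb, rfl⟩), ?_⟩
  simp [bC, cT, mul_comm]

lemma mem_grKernel_iff {x : reesAlgebra I} :
    x ∈ grKernel I ↔ ∀ i, (x : Polynomial R).coeff i ∈ I ^ (i + 1) := by
  refine ⟨fun hx ↦ ?_, fun hx ↦ ?_⟩
  · induction hx using Submodule.span_induction with
    | mem x hx =>
      obtain ⟨a, ha, hxa⟩ := hx
      intro i
      rw [hxa, Polynomial.coeff_C]
      split_ifs with hi
      · simpa only [hi, zero_add, pow_one] using ha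
      · exact zero_mem _
    | zero => exact fun i ↦ zero_mem _
    | add x y _ _ ihx ihy => exact fun i ↦ add_mem (ihx i) (ihy i)
    | smul a x _ ih =>
      intro i
      rw [smul_eq_mul, Subalgebra.coe_mul, Polynomial.coeff_mul]
      refine sum_mem fun p hp ↦ ?_
      rw [← mem_antidiagonal.1 hp, add_assoc, pow_add]
      exact Ideal.mul_mem_mul (a.2 p.1) (ih p.2)
  · have hmem : (x : Polynomial R) ∈
        ((grKernel I).restrictScalars R).map (reesAlgebra I).val.toLinearMap := by
      rw [(x : Polynomial R).as_sum_support]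
      exact sum_mem fun i _ ↦ monomial_mem_grKernel i (hx i)
    obtain ⟨y, hy, hyx⟩ := hmem
    rwa [← Subtype.ext hyx]

lemma isRadical_grKernel_of_sq_mem
    (h : ∀ (q : ℕ) (f : R), f ^ 2 ∈ I ^ (2 * q + 1) → f ∈ I ^ (q + 1)) :
    (grKernel I).IsRadical := by
  refine (Ideal.isRadical_iff_pow_one_lt 2 one_lt_two).2 fun x hx ↦ ?_
  rw [mem_grKernel_iff] at hx ⊢
  intro i
  induction i using Nat.strong_induction_on with
  | _ i ih =>
    have hcoeff := hx (2 * i)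
    rw [Subalgebra.coe_pow, sq, Polynomial.coeff_mul, ← Finset.add_sum_erase _ _
      (mem_antidiagonal.2 (two_mul i).symm : (i, i) ∈ antidiagonal (2 * i)),
      ← sq] at hcoeff
    refine h i _ ((Submodule.add_mem_iff_left _ (sum_mem fun p hp ↦ ?_)).1 hcoeff)
    obtain ⟨hne, hp⟩ := Finset.mem_erase.1 hp
    rw [mem_antidiagonal] at hp
    rcases lt_trichotomy p.1 i with hlt | heq | hgt
    · rw [← hp, add_right_comm, pow_add]
      exact Ideal.mul_mem_mul (ih _ hlt) (x.2 _)
    · exact absurd (Prod.ext heq (by lia)) hne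
    · rw [← hp, add_assoc, pow_add]
      exact Ideal.mul_mem_mul (x.2 _) (ih _ (by lia))

lemma mul_coeff_pow_mem {p : Ideal R} {g : Polynomial R}
    (hg : ∀ a ∈ p, ∀ k, a * g.coeff k ∈ I ^ (k + 1)) {s : ℕ} {a : R} (ha : a ∈ p ^ s) (k : ℕ) :
    a * (g ^ s).coeff k ∈ I ^ (k + s) := by
  induction s generalizing a k with
  | zero =>
    rw [pow_zero, Polynomial.coeff_one]
    split_ifs with hk
    · simp only [hk, zero_add, pow_zero, Ideal.one_eq_top, Submodule.mem_top]
    · rw [mul_zero]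
      exact zero_mem _
  | succ s ih =>
    rw [pow_succ] at ha
    induction ha using Submodule.mul_induction_on' with
    | mem_mul_mem b hb c hc =>
      rw [pow_succ, Polynomial.coeff_mul, Finset.mul_sum]
      refine sum_mem fun n hn ↦ ?_
      rw [mul_mul_mul_comm, ← mem_antidiagonal.1 hn, add_add_add_comm, pow_add]
      exact Ideal.mul_mem_mul (ih hb n.1) (hg c hc n.2)
    | add b _ c _ ihb ihc => rw [add_mul]; exact add_mem ihb ihc

variable [IsNoetherianRing R]

lemma exists_notMem_mul_coeff_mem_of_mem_minimalPrimes_grKernel (h : (grKernel I).IsRadical)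
    {P : Ideal (reesAlgebra I)} (hP : P ∈ (grKernel I).minimalPrimes) :
    ∃ g ∉ P, ∀ a ∈ P.comap (algebraMap R (reesAlgebra I)), ∀ k,
      a * (g : Polynomial R).coeff k ∈ I ^ (k + 1) := by
  obtain ⟨g, hg, hPg⟩ := exists_notMem_eq_colon_of_mem_minimalPrimes h hP
  refine ⟨g, hg, fun a ha k ↦ ?_⟩
  rw [Ideal.mem_comap, hPg, Submodule.mem_colon_singleton, smul_eq_mul, mem_grKernel_iff] at ha
  simpa only [Subalgebra.coe_mul, Subalgebra.coe_algebraMap, Polynomial.algebraMap_eq,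
    Polynomial.coeff_C_mul] using ha k

lemma mem_pow_succ_of_isRadical_grKernel (h : (grKernel I).IsRadical) {q : ℕ} {f : R}
    (hf : f ∈ I ^ q) (hfp : ∀ p : Ideal R, p.IsPrime → I ≤ p → f ∈ p ^ (q + 1)) :
    f ∈ I ^ (q + 1) := by
  let x : reesAlgebra I := ⟨Polynomial.monomial q f, reesAlgebra.monomial_mem.2 hf⟩
  suffices hx : x ∈ grKernel I by
    simpa only [x, Polynomial.coeff_monomial_same] using mem_grKernel_iff.1 hx q
  rw [← h.radical, ← Ideal.sInf_minimalPrimes, Ideal.mem_sInf]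
  intro P hP
  have hprime : P.IsPrime := hP.1.1
  obtain ⟨g, hgP, hg⟩ := exists_notMem_mul_coeff_mem_of_mem_minimalPrimes_grKernel h hP
  have hfP := hfp (P.comap (algebraMap R (reesAlgebra I))) inferInstance
    fun a ha ↦ hP.1.2 (Ideal.subset_span ⟨a, ha, rfl⟩)
  have hxg : x * g ^ (q + 1) ∈ grKernel I := by
    refine mem_grKernel_iff.2 fun i ↦ ?_
    rw [Subalgebra.coe_mul, Subalgebra.coe_pow,
      show (x : Polynomial R) = _ from (Polynomial.C_mul_X_pow_eq_monomial).symm,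
      mul_assoc, Polynomial.coeff_C_mul, Polynomial.coeff_X_pow_mul']
    split_ifs with hqi
    · simpa only [← add_assoc, Nat.sub_add_cancel hqi] using mul_coeff_pow_mem hg hfP (i - q)
    · rw [mul_zero]
      exact zero_mem _
  exact (hprime.mem_or_mem (hP.1.2 hxg)).resolve_right fun hg ↦ hgP (hprime.mem_of_pow_mem _ hg)

lemma iInf_minimalPrimes_pow_le_of_isRadical_grKernel (h : (grKernel I).IsRadical) (q : ℕ) :
    ⨅ p ∈ I.minimalPrimes, p ^ q ≤ I ^ q := by
  induction q with
  | zero => simp only [pow_zero, Ideal.one_eq_top, le_top]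
  | succ q ih =>
    intro f hf
    refine mem_pow_succ_of_isRadical_grKernel h (ih ?_) fun P hP hIP ↦ ?_
    · exact iInf₂_mono (fun p _ ↦ Ideal.pow_le_pow_right q.le_succ) hf
    · obtain ⟨p, hp, hpP⟩ := Ideal.exists_minimalPrimes_le hIP
      have hle : ⨅ p ∈ I.minimalPrimes, p ^ (q + 1) ≤ p ^ (q + 1) := iInf₂_le p hp
      exact Ideal.pow_right_mono hpP _ (hle hf)

end AssociatedGraded

section VarsIdeal

variable {σ R : Type*} [CommSemiring R]

variable (R) in
/-- The ideal generated by the variables `X i` with `i ∈ C`. For the vertex covers `C` of a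
hypergraph these are the primes whose powers intersect to the symbolic powers of the edge ideal. -/
noncomputable def varsIdeal (C : Finset σ) : Ideal (MvPolynomial σ R) :=
  Ideal.span (X '' (C : Set σ))

/-- The order of vanishing of a polynomial along the coordinate subspace `X i = 0`, `i ∈ C`: the
least degree of its monomials in the variables indexed by `C`, and `⊤` for the zero polynomial. -/
noncomputable def varsOrder (C : Finset σ) (f : MvPolynomial σ R) : ℕ∞ :=
  (f : MvPowerSeries σ R).weightedOrder ((C : Set σ).indicator 1)

variable {C : Finset σ} {f g : MvPolynomial σ R} {q : ℕ}

lemma weight_indicator_one (C : Finset σ) (s : σ →₀ ℕ) :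
    Finsupp.weight ((C : Set σ).indicator 1) s = ∑ i ∈ C, s i := by
  classical
  simp only [Finsupp.weight_apply, Finsupp.sum, Set.indicator_apply, Finset.mem_coe, smul_eq_mul,
    Pi.one_apply, mul_ite, mul_one, mul_zero, Finset.sum_ite_mem]
  refine Finset.sum_subset Finset.inter_subset_right fun i hi his ↦ ?_
  by_contra hsi
  exact his (Finset.mem_inter.2 ⟨Finsupp.mem_support_iff.2 hsi, hi⟩)

lemma le_varsOrder_iff : q ≤ varsOrder C f ↔ ∀ s ∈ f.support, q ≤ ∑ i ∈ C, s i := by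
  refine ⟨fun h s hs ↦ ?_, fun h ↦ MvPowerSeries.nat_le_weightedOrder _ fun s hs ↦ ?_⟩
  · by_contra! hlt
    rw [mem_support_iff, ← coeff_coe] at hs
    refine hs (MvPowerSeries.coeff_eq_zero_of_lt_weightedOrder _ (lt_of_lt_of_le ?_ h))
    rwa [weight_indicator_one, Nat.cast_lt]
  · rw [weight_indicator_one] at hs
    rw [coeff_coe]
    by_contra hn
    exact hs.not_ge (h s (mem_support_iff.2 hn))

lemma mem_varsIdeal_iff : f ∈ varsIdeal R C ↔ (1 : ℕ) ≤ varsOrder C f := by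
  simp only [varsIdeal, mem_ideal_span_X_image, le_varsOrder_iff, Nat.one_le_iff_ne_zero, ne_eq,
    Finset.sum_eq_zero_iff, not_forall, Finset.mem_coe, exists_prop]

lemma varsOrder_eq_zero_of_notMem (hf : f ∉ varsIdeal R C) : varsOrder C f = 0 := by
  rwa [mem_varsIdeal_iff, Nat.cast_one, Order.one_le_iff_ne_zero, not_not] at hf

lemma monomial_mem_varsIdeal_pow (C : Finset σ) (s : σ →₀ ℕ) (a : R) :
    monomial s a ∈ varsIdeal R C ^ ∑ i ∈ C, s i := by
  classical
  have hdvd : ∏ i ∈ C, X i ^ s i ∣ monomial s a := by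
    rw [monomial_eq, s.prod_of_support_subset (Finset.subset_union_left (s₂ := C)) _
      fun i _ ↦ pow_zero _]
    exact (Finset.prod_dvd_prod_of_subset _ _ _ Finset.subset_union_right).mul_left _
  refine Ideal.mem_of_dvd _ hdvd ?_
  rw [← Finset.prod_pow_eq_pow_sum]
  exact Ideal.prod_mem_prod fun i hi ↦
    Ideal.pow_mem_pow (Ideal.subset_span (Set.mem_image_of_mem X hi)) _

lemma mem_varsIdeal_pow_iff_le_varsOrder : f ∈ varsIdeal R C ^ q ↔ q ≤ varsOrder C f := by
  refine ⟨fun hf ↦ ?_, fun h ↦ ?_⟩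
  · induction q generalizing f with
    | zero => exact zero_le
    | succ q ih =>
      rw [pow_succ] at hf
      induction hf using Submodule.mul_induction_on' with
      | mem_mul_mem a ha b hb =>
        rw [Nat.cast_add, varsOrder, coe_mul]
        exact (add_le_add (ih ha) (mem_varsIdeal_iff.1 hb)).trans
          (MvPowerSeries.le_weightedOrder_mul _)
      | add a _ b _ iha ihb =>
        rw [varsOrder, coe_add]
        exact (le_min iha ihb).trans (MvPowerSeries.min_weightedOrder_le_add _)
  · rw [f.as_sum]
    exact sum_mem fun s hs ↦
      Ideal.pow_le_pow_right (le_varsOrder_iff.1 h s hs) (monomial_mem_varsIdeal_pow C s _)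

lemma mem_varsIdeal_pow_iff :
    f ∈ varsIdeal R C ^ q ↔ ∀ s ∈ f.support, q ≤ ∑ i ∈ C, s i :=
  mem_varsIdeal_pow_iff_le_varsOrder.trans le_varsOrder_iff

variable [NoZeroDivisors R]

lemma varsOrder_mul : varsOrder C (f * g) = varsOrder C f + varsOrder C g := by
  simp only [varsOrder, coe_mul, MvPowerSeries.weightedOrder_mul]

lemma mem_varsIdeal_pow_of_mul_mem (h : f * g ∈ varsIdeal R C ^ q) (hf : f ∉ varsIdeal R C) :
    g ∈ varsIdeal R C ^ q := by
  rwa [mem_varsIdeal_pow_iff_le_varsOrder, varsOrder_mul, varsOrder_eq_zero_of_notMem hf,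
    zero_add, ← mem_varsIdeal_pow_iff_le_varsOrder] at h

lemma varsIdeal_isPrime [Nontrivial R] (C : Finset σ) : (varsIdeal R C).IsPrime where
  ne_top' := by
    rw [Ideal.ne_top_iff_one, mem_varsIdeal_iff, le_varsOrder_iff]
    intro h
    simpa using h 0 (by simp)
  mem_or_mem' {f g} h := or_iff_not_imp_left.2 fun hf ↦ by
    rw [← pow_one (varsIdeal R C)] at h ⊢
    exact mem_varsIdeal_pow_of_mul_mem h hf

lemma varsIdeal_pow_isPrimary [Nontrivial R] (C : Finset σ) (hq : q ≠ 0) :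
    (varsIdeal R C ^ q).IsPrimary := by
  have hprime := varsIdeal_isPrime (R := R) C
  have hne_top : varsIdeal R C ^ q ≠ ⊤ := fun h ↦
    (Ideal.pow_eq_top_iff.1 h).elim hprime.ne_top hq
  refine Ideal.isPrimary_iff.2 ⟨hne_top, fun {f g} h ↦ ?_⟩
  rw [Ideal.radical_pow _ hq, hprime.radical]
  exact or_iff_not_imp_right.2 fun hg ↦ mem_varsIdeal_pow_of_mul_mem (mul_comm f g ▸ h) hg

lemma mem_varsIdeal_pow_succ_of_sq_mem (h : f ^ 2 ∈ varsIdeal R C ^ (2 * q + 1)) :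
    f ∈ varsIdeal R C ^ (q + 1) := by
  rw [mem_varsIdeal_pow_iff_le_varsOrder] at h ⊢
  rw [sq, varsOrder_mul] at h
  generalize varsOrder C f = d at h ⊢
  cases d with
  | top => exact le_top
  | coe k =>
    norm_cast at h ⊢
    lia

end VarsIdeal

lemma mem_span_monomial_pow_iff {σ ι R : Type*} [CommSemiring R] {a : ι → σ →₀ ℕ} {q : ℕ}
    {f : MvPolynomial σ R} :
    f ∈ Ideal.span (Set.range fun j ↦ monomial (a j) (1 : R)) ^ q ↔
      ∀ s ∈ f.support, ∃ y : ι →₀ ℕ, y.degree = q ∧ y.sum (fun j k ↦ k • a j) ≤ s := by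
  have hpow : Ideal.span (Set.range fun j ↦ monomial (a j) (1 : R)) ^ q =
      Ideal.span ((fun s ↦ monomial s (1 : R)) ''
        ((fun y : ι →₀ ℕ ↦ y.sum fun j k ↦ k • a j) '' {y | y.degree = q})) := by
    rw [Ideal.span, Submodule.span_pow, ← Set.image_univ, Finsupp.image_pow_eq_finsuppProd_image,
      Set.image_image]
    simp only [Set.subset_univ, and_true, monomial_pow, one_pow, monomial_finsupp_sum_index, C_1,
      one_mul]
  rw [hpow, mem_ideal_span_monomial_image]
  simp only [Set.exists_mem_image, Set.mem_ofPred_eq]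

lemma sum_le_sum_mul_of_dual_feasible {ι κ R : Type*} [Fintype ι] [Fintype κ] [CommSemiring R]
    [PartialOrder R] [IsOrderedRing R] {A : ι → κ → R} {y : κ → R} {z c : ι → R}
    (hy : ∀ j, 0 ≤ y j) (hz : ∀ i, 0 ≤ z i) (hyc : ∀ i, ∑ j, y j * A i j ≤ c i)
    (hz1 : ∀ j, 1 ≤ ∑ i, A i j * z i) : ∑ j, y j ≤ ∑ i, c i * z i :=
  calc
    ∑ j, y j ≤ ∑ j, y j * ∑ i, A i j * z i :=
      Finset.sum_le_sum fun j _ ↦ le_mul_of_one_le_right (hy j) (hz1 j)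
    _ = ∑ i, (∑ j, y j * A i j) * z i := by
      simp_rw [Finset.mul_sum, Finset.sum_mul, mul_assoc]
      exact Finset.sum_comm
    _ ≤ ∑ i, c i * z i :=
      Finset.sum_le_sum fun i _ ↦ mul_le_mul_of_nonneg_right (hyc i) (hz i)

section Hypergraph

/-- `C` is a vertex cover of the hypergraph with edges `E j`: it meets every edge. -/
def IsVertexCover {σ ι : Type*} (E : ι → Finset σ) (C : Finset σ) : Prop :=
  ∀ j, ∃ i ∈ E j, i ∈ C

variable {K : Type*} [Field K] {n m : ℕ} {E : Fin m → Finset (Fin n)} {C : Finset (Fin n)}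
  {c : Fin n → ℕ} {q : ℕ}

variable (E) in
/-- There is a packing of exactly `q` edges, counted with multiplicities `y j`, into the vertex
capacities `c`, that is, an integral feasible point of value `q` of the maximization problem. -/
def HasPacking (c : Fin n → ℕ) (q : ℕ) : Prop :=
  ∃ y : Fin m → ℕ, (∀ i, ∑ j, y j * incMatrix E i j ≤ c i) ∧ ∑ j, y j = q

lemma HasPacking.of_le {r : ℕ} (h : HasPacking E c r) (hqr : q ≤ r) : HasPacking E c q := by
  obtain ⟨y, hy, rfl⟩ := h
  obtain ⟨y', hle, hdeg⟩ := Finsupp.exists_le_degree_eq (Finsupp.equivFunOnFinite.symm y) q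
    (by simpa [Finsupp.degree_eq_sum] using hqr)
  refine ⟨y', fun i ↦ (Finset.sum_le_sum fun j _ ↦ ?_).trans (hy i), ?_⟩
  · exact Nat.mul_le_mul_right _ (hle j)
  · rw [← Finsupp.degree_eq_sum, hdeg]

lemma hasPacking_one_of_incMatrix_le {j : Fin m} (h : ∀ i, incMatrix E i j ≤ c i) :
    HasPacking E c 1 :=
  ⟨Pi.single j 1, fun i ↦ by simpa [Pi.single_apply] using h i, by simp [Pi.single_apply]⟩

lemma hasPacking_one_of_forall_isVertexCover
    (h : ∀ C, IsVertexCover E C → 1 ≤ ∑ i ∈ C, c i) : HasPacking E c 1 := by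
  by_contra hn
  have hcov : IsVertexCover E {i | c i = 0} := by
    intro j
    by_contra! hj
    refine hn (hasPacking_one_of_incMatrix_le (j := j) fun i ↦ ?_)
    rw [incMatrix]
    split_ifs with hi
    · simpa [Nat.one_le_iff_ne_zero] using hj i hi
    · exact Nat.zero_le _
  exact absurd (h _ hcov) (by simp [Finset.sum_filter])

lemma IsVertexCover.one_le_sum_incMatrix (hC : IsVertexCover E C) (j : Fin m) :
    1 ≤ ∑ i, incMatrix E i j * if i ∈ C then 1 else 0 := by
  obtain ⟨i, hi, hiC⟩ := hC j
  refine le_trans ?_ (Finset.single_le_sum (fun _ _ ↦ Nat.zero_le _) (Finset.mem_univ i))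
  rw [incMatrix, if_pos hi, if_pos hiC]

lemma isVertexCover_of_one_le_sum_incMatrix {z : Fin n → ℕ}
    (hz : ∀ j, 1 ≤ ∑ i, incMatrix E i j * z i) : IsVertexCover E {i | 1 ≤ z i} := by
  intro j
  obtain ⟨i, -, hi⟩ := Finset.exists_ne_zero_of_sum_ne_zero (Nat.one_le_iff_ne_zero.1 (hz j))
  obtain ⟨hij, hzi⟩ := mul_ne_zero_iff.1 hi
  exact ⟨i, of_not_not fun h ↦ hij (if_neg h),
    Finset.mem_filter.2 ⟨Finset.mem_univ i, Nat.one_le_iff_ne_zero.2 hzi⟩⟩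

lemma hasPacking_of_hasMFMC (h : HasMFMC E) (hq : ∀ C, IsVertexCover E C → q ≤ ∑ i ∈ C, c i) :
    HasPacking E c q := by
  obtain ⟨y, z, hy, hz, -, -, heq⟩ := h c
  refine HasPacking.of_le ⟨y, hy, rfl⟩ ?_
  calc
    q ≤ ∑ i with 1 ≤ z i, c i := hq _ (isVertexCover_of_one_le_sum_incMatrix hz)
    _ ≤ ∑ i with 1 ≤ z i, c i * z i :=
      Finset.sum_le_sum fun i hi ↦ Nat.le_mul_of_pos_right _ (Finset.mem_filter.1 hi).2
    _ ≤ ∑ i, c i * z i := Finset.sum_le_sum_of_subset (Finset.filter_subset _ _)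
    _ = ∑ j, y j := by exact_mod_cast heq.symm

lemma hasMFMC_of_forall_hasPacking (hne : ∀ j, (E j).Nonempty)
    (h : ∀ c q, (∀ C, IsVertexCover E C → q ≤ ∑ i ∈ C, c i) → HasPacking E c q) : HasMFMC E := by
  classical
  intro c
  have huniv : IsVertexCover E Finset.univ := fun j ↦
    (hne j).imp fun i hi ↦ ⟨hi, Finset.mem_univ i⟩
  obtain ⟨C, hC, hmin⟩ := Set.exists_min_image {C | IsVertexCover E C} (fun C ↦ ∑ i ∈ C, c i)
    (Set.toFinite _) ⟨_, huniv⟩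
  obtain ⟨y, hy, hsum⟩ := h c (∑ i ∈ C, c i) hmin
  let z : Fin n → ℕ := fun i ↦ if i ∈ C then 1 else 0
  have hz : ∀ j, 1 ≤ ∑ i, incMatrix E i j * z i := hC.one_le_sum_incMatrix
  have heq : ∑ j, (y j : ℝ) = ∑ i, (c i : ℝ) * (z i : ℝ) := by
    exact_mod_cast hsum.trans (by simp [z])
  refine ⟨y, z, hy, hz, fun y' hy' hyc' ↦ ?_, fun z' hz' hz1' ↦ ?_, heq⟩
  · rw [heq]
    exact sum_le_sum_mul_of_dual_feasible hy' (fun i ↦ (z i).cast_nonneg) hyc'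
      fun j ↦ by exact_mod_cast hz j
  · rw [← heq]
    exact sum_le_sum_mul_of_dual_feasible (fun j ↦ (y j).cast_nonneg) hz'
      (fun i ↦ by exact_mod_cast hy i) hz1'

variable (K E) in
lemma edgeIdealF_eq_span_monomial :
    edgeIdealF K E = Ideal.span (Set.range fun j ↦
      monomial (Finsupp.equivFunOnFinite.symm fun i ↦ incMatrix E i j) (1 : K)) := by
  have hprod : ∀ j, monomial (Finsupp.equivFunOnFinite.symm fun i ↦ incMatrix E i j) (1 : K) =
      ∏ i ∈ E j, X i := fun j ↦ by
    rw [monomial_eq, Finsupp.prod_fintype _ _ fun i ↦ pow_zero _]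
    simp [incMatrix, pow_ite]
  simp only [hprod, edgeIdealF, Set.range, eq_comm]

lemma mem_edgeIdealF_pow_iff {f : MvPolynomial (Fin n) K} :
    f ∈ edgeIdealF K E ^ q ↔ ∀ s ∈ f.support, HasPacking E s q := by
  rw [edgeIdealF_eq_span_monomial, mem_span_monomial_pow_iff]
  refine forall₂_congr fun s _ ↦ ?_
  rw [Finsupp.equivFunOnFinite.exists_congr_left, HasPacking]
  refine exists_congr fun y ↦ and_comm.trans (and_congr ?_ ?_)
  · rw [Finsupp.sum_fintype _ _ (by simp), Finsupp.le_def]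
    simp
  · simp [Finsupp.degree_eq_sum]

variable (K E) in
lemma edgeIdealF_eq_iInf_varsIdeal :
    edgeIdealF K E = ⨅ C : {C // IsVertexCover E C}, varsIdeal K C.1 := by
  refine le_antisymm (le_iInf fun C ↦ Ideal.span_le.2 ?_) fun f hf ↦ ?_
  · rintro _ ⟨j, rfl⟩
    obtain ⟨i, hi, hiC⟩ := C.2 j
    exact Ideal.mem_of_dvd _ (Finset.dvd_prod_of_mem X hi)
      (Ideal.subset_span (Set.mem_image_of_mem X hiC))
  · rw [← pow_one (edgeIdealF K E), mem_edgeIdealF_pow_iff]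
    refine fun s hs ↦ hasPacking_one_of_forall_isVertexCover fun C hC ↦ ?_
    have hfC : f ∈ varsIdeal K C := (Submodule.mem_iInf _).1 hf ⟨C, hC⟩
    exact mem_varsIdeal_pow_iff.1 (by rwa [pow_one]) s hs

variable (K E) in
lemma edgeIdealF_isRadical : (edgeIdealF K E).IsRadical := by
  rw [edgeIdealF_eq_iInf_varsIdeal]
  exact Ideal.isRadical_iInf _ fun C ↦ (varsIdeal_isPrime C.1).isRadical

lemma isPrimary_pow_of_mem_minimalPrimes_edgeIdealF (hq : q ≠ 0)
    {p : Ideal (MvPolynomial (Fin n) K)} (hp : p ∈ (edgeIdealF K E).minimalPrimes) :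
    (p ^ q).IsPrimary := by
  rw [edgeIdealF_eq_iInf_varsIdeal] at hp
  obtain ⟨C, rfl⟩ := minimalPrimes_iInf_subset_range
    (fun C : {C // IsVertexCover E C} ↦ varsIdeal_isPrime C.1) hp
  exact varsIdeal_pow_isPrimary C.1 hq

variable (K E) in
lemma symbPow_edgeIdealF_eq_iInf_minimalPrimes (q : ℕ) :
    symbPow (edgeIdealF K E) q = ⨅ p ∈ (edgeIdealF K E).minimalPrimes, p ^ q := by
  rw [symbPow, associatedPrimes_quotient_eq_minimalPrimes (edgeIdealF_isRadical K E)]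

lemma mem_symbPow_edgeIdealF_iff {f : MvPolynomial (Fin n) K} :
    f ∈ symbPow (edgeIdealF K E) q ↔ ∀ C, IsVertexCover E C → f ∈ varsIdeal K C ^ q := by
  rw [symbPow_edgeIdealF_eq_iInf_minimalPrimes, edgeIdealF_eq_iInf_varsIdeal,
    iInf_minimalPrimes_iInf_pow fun C : {C // IsVertexCover E C} ↦ varsIdeal_isPrime C.1,
    Submodule.mem_iInf, Subtype.forall]

lemma symbPow_edgeIdealF_eq_pow_iff : symbPow (edgeIdealF K E) q = edgeIdealF K E ^ q ↔
    ⨅ p ∈ (edgeIdealF K E).minimalPrimes, p ^ q ≤ edgeIdealF K E ^ q := by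
  rw [symbPow_edgeIdealF_eq_iInf_minimalPrimes]
  exact ⟨Eq.le, fun h ↦ h.antisymm (le_iInf₂ fun p hp ↦ Ideal.pow_right_mono hp.1.2 q)⟩

lemma symbPow_edgeIdealF_eq_pow_of_hasMFMC (h : HasMFMC E) (q : ℕ) :
    symbPow (edgeIdealF K E) q = edgeIdealF K E ^ q := by
  rw [symbPow_edgeIdealF_eq_pow_iff, ← symbPow_edgeIdealF_eq_iInf_minimalPrimes]
  intro f hf
  exact mem_edgeIdealF_pow_iff.2 fun s hs ↦ hasPacking_of_hasMFMC h fun C hC ↦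
    mem_varsIdeal_pow_iff.1 (mem_symbPow_edgeIdealF_iff.1 hf C hC) s hs

lemma hasMFMC_of_symbPow_edgeIdealF_eq_pow (hne : ∀ j, (E j).Nonempty)
    (h : ∀ q, symbPow (edgeIdealF K E) q = edgeIdealF K E ^ q) : HasMFMC E := by
  refine hasMFMC_of_forall_hasPacking hne fun c q hc ↦ ?_
  let s : Fin n →₀ ℕ := Finsupp.equivFunOnFinite.symm c
  have hs : monomial s (1 : K) ∈ edgeIdealF K E ^ q := by
    rw [← h q, mem_symbPow_edgeIdealF_iff]
    intro C hC
    exact Ideal.pow_le_pow_right (hc C hC) (monomial_mem_varsIdeal_pow C s 1)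
  exact mem_edgeIdealF_pow_iff.1 hs s (by simp)

lemma isRadical_grKernel_of_symbPow_edgeIdealF_eq_pow
    (h : ∀ q, symbPow (edgeIdealF K E) q = edgeIdealF K E ^ q) :
    (grKernel (edgeIdealF K E)).IsRadical := by
  refine isRadical_grKernel_of_sq_mem fun q f hf ↦ ?_
  rw [← h, mem_symbPow_edgeIdealF_iff] at hf ⊢
  exact fun C hC ↦ mem_varsIdeal_pow_succ_of_sq_mem (hf C hC)

lemma symbPow_edgeIdealF_eq_pow_iff_associatedPrimes_eq :
    (∀ q, symbPow (edgeIdealF K E) q = edgeIdealF K E ^ q) ↔ ∀ q, 1 ≤ q →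
      associatedPrimes (MvPolynomial (Fin n) K) (MvPolynomial (Fin n) K ⧸ edgeIdealF K E ^ q) =
        associatedPrimes (MvPolynomial (Fin n) K) (MvPolynomial (Fin n) K ⧸ edgeIdealF K E) := by
  have hrad := edgeIdealF_isRadical K E
  refine ⟨fun h q hq ↦ ?_, fun h q ↦ symbPow_edgeIdealF_eq_pow_iff.2 ?_⟩
  · have hq0 : q ≠ 0 := Nat.one_le_iff_ne_zero.1 hq
    rw [associatedPrimes_quotient_eq_minimalPrimes hrad]
    exact associatedPrimes_quotient_eq_minimalPrimes_of_isPrimary_pow hrad hq0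
      (fun p ↦ isPrimary_pow_of_mem_minimalPrimes_edgeIdealF hq0)
      (by rw [← h, symbPow_edgeIdealF_eq_iInf_minimalPrimes])
  · rcases Nat.eq_zero_or_pos q with rfl | hq
    · simp only [pow_zero, Ideal.one_eq_top, le_top]
    · exact iInf_minimalPrimes_pow_le_of_associatedPrimes_subset hrad (h q hq).subset

end Hypergraph

theorem mfmc_tfae_general {n m : ℕ} (K : Type*) [Field K] (E : Fin m → Finset (Fin n))
    (hne : ∀ j, (E j).Nonempty) :
    [ HasMFMC E,
      ∀ q : ℕ, symbPow (edgeIdealF K E) q = edgeIdealF K E ^ q,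
      IsReduced ((reesAlgebra (edgeIdealF K E)) ⧸ grKernel (edgeIdealF K E)),
      ∀ q : ℕ, 1 ≤ q →
        associatedPrimes (MvPolynomial (Fin n) K)
            (MvPolynomial (Fin n) K ⧸ (edgeIdealF K E ^ q)) =
          associatedPrimes (MvPolynomial (Fin n) K)
            (MvPolynomial (Fin n) K ⧸ edgeIdealF K E) ].TFAE := by
  rw [← Ideal.isRadical_iff_quotient_reduced]
  tfae_have 1 → 2 := symbPow_edgeIdealF_eq_pow_of_hasMFMC
  tfae_have 2 → 1 := hasMFMC_of_symbPow_edgeIdealF_eq_pow hne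
  tfae_have 2 → 3 := isRadical_grKernel_of_symbPow_edgeIdealF_eq_pow
  tfae_have 3 → 2 := fun h q ↦
    symbPow_edgeIdealF_eq_pow_iff.2 (iInf_minimalPrimes_pow_le_of_isRadical_grKernel h q)
  tfae_have 2 ↔ 4 := symbPow_edgeIdealF_eq_pow_iff_associatedPrimes_eq
  tfae_finish

/-- For a simple hypergraph `G` with edges `E 0, …, E (m-1)` and edge
ideal `I = I(G)`, the following are equivalent: (1) `G` has the max-flow-min-cut
property; (2) `I^{(q)} = I^q` for all `q ≥ 0`; (3) the associated graded ring
`gr_I = R(I)/I·R(I)` is reduced; (4) `I` is normally torsion-free, i.e. all powers of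
`I` have the same associated primes. -/
theorem mfmc_tfae {n m : ℕ} (K : Type*) [Field K] (E : Fin m → Finset (Fin n))
    (hne : ∀ j, (E j).Nonempty)
    (hsimple : ∀ j j' : Fin m, E j ⊆ E j' → j = j') :
    [ HasMFMC E,
      ∀ q : ℕ, symbPow (edgeIdealF K E) q = edgeIdealF K E ^ q,
      IsReduced ((reesAlgebra (edgeIdealF K E)) ⧸ grKernel (edgeIdealF K E)),
      ∀ q : ℕ, 1 ≤ q →
        associatedPrimes (MvPolynomial (Fin n) K)
            (MvPolynomial (Fin n) K ⧸ (edgeIdealF K E ^ q)) =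
          associatedPrimes (MvPolynomial (Fin n) K)
            (MvPolynomial (Fin n) K ⧸ edgeIdealF K E) ].TFAE :=
  mfmc_tfae_general K E hne
end
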